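/- Khintchine's transference principle: the set of very well approximable vectors in ℝⁿ defined simultaneously equals the set defined linearly; i.e. ⋃_{α > 1/n} S_α(ℝⁿ) = ⋃_{β > n} L_β(ℝⁿ). -/

import Mathlib

open Filter

/-- The set `S_α(ℝⁿ)` of simultaneously α-very well approximable vectors:
`‖q•x − p‖ ≤ q^{−α}` for infinitely many `(q, p) ∈ ℕ × ℤⁿ` (max-norm). -/
noncomputable def SAlpha (n : ℕ) (α : ℝ) : Set (Fin n → ℝ) :=
  {x | {qp : ℕ × (Fin n → ℤ) | 0 < qp.1 ∧
      ‖(qp.1 : ℝ) • x - (fun i => (qp.2 i : ℝ))‖ ≤ (qp.1 : ℝ) ^ (-α)}.Infinite}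

/-- The set `L_β(ℝⁿ)` of linearly β-very well approximable vectors:
`|q̄·x − p| ≤ ‖q̄‖^{−β}` for infinitely many `(q̄, p) ∈ ℤⁿ × ℕ` (max-norm on `q̄`). -/
noncomputable def LBeta (n : ℕ) (β : ℝ) : Set (Fin n → ℝ) :=
  {x | {qp : (Fin n → ℤ) × ℕ | qp.1 ≠ 0 ∧
      |(∑ i, (qp.1 i : ℝ) * x i) - (qp.2 : ℝ)| ≤
        ‖(fun i => (qp.1 i : ℝ) : Fin n → ℝ)‖ ^ (-β)}.Infinite}


lemma norm_max {n : ℕ} (hn : 0 < n) (u : Fin n → ℤ) :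
    ∃ j, (∀ i, |u i| ≤ |u j|) ∧ ‖(fun i => (u i : ℝ) : Fin n → ℝ)‖ = |(u j : ℝ)| := by
  have : Nonempty (Fin n) := ⟨⟨0, hn⟩⟩
  obtain ⟨j, -, hj⟩ := Finset.exists_max_image Finset.univ (fun i => |u i|) Finset.univ_nonempty
  refine ⟨j, fun i => hj i (Finset.mem_univ _), le_antisymm ?_ ?_⟩
  · rw [pi_norm_le_iff_of_nonneg (abs_nonneg _)]
    intro i
    rw [Real.norm_eq_abs]
    exact_mod_cast hj i (Finset.mem_univ _)
  · exact norm_le_pi_norm (fun i => (u i : ℝ) : Fin n → ℝ) j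

lemma one_le_norm {n : ℕ} (hn : 0 < n) (u : Fin n → ℤ) (hu : u ≠ 0) :
    1 ≤ ‖(fun i => (u i : ℝ) : Fin n → ℝ)‖ := by
  obtain ⟨j, hj, h⟩ := norm_max hn u
  rw [h]
  have : u j ≠ 0 := by
    intro h0
    apply hu
    funext i
    have := hj i
    rw [h0] at this
    simpa using this
  exact_mod_cast Int.one_le_abs this

/-- unbounded denominators in the simultaneous problem -/
lemma s_unbounded {n : ℕ} {α : ℝ} (hα : 0 < α) {x : Fin n → ℝ} (hx : x ∈ SAlpha n α) (N : ℕ) :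
    ∃ q : ℕ, ∃ p : Fin n → ℤ, N ≤ q ∧ 0 < q ∧
      ‖(q : ℝ) • x - (fun i => (p i : ℝ))‖ ≤ (q : ℝ) ^ (-α) := by
  by_contra! hcon
  apply hx
  set M : ℤ := ⌈(N : ℝ) * ‖x‖ + 1⌉
  apply ((Set.finite_Iio N).prod (Set.finite_Icc (fun _ : Fin n => -M) (fun _ => M))).subset
  rintro ⟨q, p⟩ ⟨h0, h1⟩
  simp only at h0 h1
  have hq : q < N := by
    by_contra! h
    exact absurd h1 (not_le.2 (hcon q p h h0))
  have hle1 : (q : ℝ) ^ (-α) ≤ 1 :=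
    Real.rpow_le_one_of_one_le_of_nonpos (by exact_mod_cast h0) (by linarith)
  have key : ∀ i, |(p i : ℝ)| ≤ M := by
    intro i
    have a := norm_le_pi_norm ((q : ℝ) • x - (fun i => (p i : ℝ))) i
    have b := norm_le_pi_norm x i
    simp only [Pi.sub_apply, Pi.smul_apply, smul_eq_mul, Real.norm_eq_abs] at a b
    have c : |(p i : ℝ)| ≤ (N : ℝ) * ‖x‖ + 1 := by
      have e : (q : ℝ) * |x i| ≤ N * ‖x‖ := by gcongr
      have f : |(q : ℝ) * x i| = q * |x i| := by rw [abs_mul, Nat.abs_cast]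
      have g := abs_sub_abs_le_abs_sub (p i : ℝ) ((q : ℝ) * x i)
      rw [abs_sub_comm] at g
      linarith
    exact c.trans (Int.le_ceil _)
  refine ⟨hq, fun i => ?_, fun i => ?_⟩
  · have := (abs_le.1 (key i)).1
    exact_mod_cast this
  · have := (abs_le.1 (key i)).2
    exact_mod_cast this

lemma l_unbounded {n : ℕ} (hn : 0 < n) {β : ℝ} (hβ : 0 < β) {x : Fin n → ℝ}
    (hx : x ∈ LBeta n β) (N : ℕ) :
    ∃ u : Fin n → ℤ, ∃ v : ℕ, (N : ℝ) ≤ ‖(fun i => (u i : ℝ) : Fin n → ℝ)‖ ∧ u ≠ 0 ∧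
      |(∑ i, (u i : ℝ) * x i) - (v : ℝ)| ≤ ‖(fun i => (u i : ℝ) : Fin n → ℝ)‖ ^ (-β) := by
  by_contra! hcon
  apply hx
  set M : ℕ := ⌈(∑ i, (N : ℝ) * |x i|) + 1⌉₊
  apply ((Set.finite_Icc (fun _ : Fin n => -(N : ℤ)) (fun _ => (N : ℤ))).prod
    (Set.finite_Iic M)).subset
  rintro ⟨u, v⟩ ⟨h0, h1⟩
  simp only at h0 h1
  have hq : ‖(fun i => (u i : ℝ) : Fin n → ℝ)‖ < N := by
    by_contra! h
    exact absurd h1 (not_le.2 (hcon u v h h0))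
  have hle1 : ‖(fun i => (u i : ℝ) : Fin n → ℝ)‖ ^ (-β) ≤ 1 :=
    Real.rpow_le_one_of_one_le_of_nonpos (one_le_norm hn u h0) (by linarith)
  have key : ∀ i, |(u i : ℝ)| ≤ N := by
    intro i
    have a := norm_le_pi_norm (fun i => (u i : ℝ) : Fin n → ℝ) i
    rw [Real.norm_eq_abs] at a
    exact a.trans hq.le
  refine ⟨⟨fun i => ?_, fun i => ?_⟩, ?_⟩
  · have := (abs_le.1 (key i)).1
    exact_mod_cast this
  · have := (abs_le.1 (key i)).2
    exact_mod_cast this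
  · have e : |∑ i, (u i : ℝ) * x i| ≤ ∑ i, (N : ℝ) * |x i| := by
      refine (Finset.abs_sum_le_sum_abs _ _).trans (Finset.sum_le_sum fun i _ => ?_)
      rw [abs_mul]
      exact mul_le_mul_of_nonneg_right (key i) (abs_nonneg _)
    have f := (abs_le.1 h1).1
    have g := (abs_le.1 e).2
    have : (v : ℝ) ≤ M := le_trans (by linarith) (Nat.le_ceil _)
    exact_mod_cast this

lemma s_of_small {n : ℕ} (hn : 0 < n) {α : ℝ} {x : Fin n → ℝ}
    (h : ∀ ε > 0, ∃ q : ℕ, ∃ p : Fin n → ℤ, 0 < q ∧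
      ‖(q : ℝ) • x - (fun i => (p i : ℝ))‖ ≤ (q : ℝ) ^ (-α) ∧
      ‖(q : ℝ) • x - (fun i => (p i : ℝ))‖ < ε) : x ∈ SAlpha n α := by
  intro hfin
  by_cases hex : ∃ q : ℕ, ∃ p : Fin n → ℤ, 0 < q ∧ (q : ℝ) • x - (fun i => (p i : ℝ)) = 0
  · obtain ⟨q, p, hq, he⟩ := hex
    refine Set.infinite_of_injective_forall_mem (f := fun k : ℕ => ((k + 1) * q, ((k : ℤ) + 1) • p))
      ?_ ?_ hfin
    · intro a b hab
      have := (Prod.mk.inj hab).1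
      have := Nat.eq_of_mul_eq_mul_right hq this
      omega
    · intro k
      refine ⟨by positivity, ?_⟩
      have : (((k + 1) * q : ℕ) : ℝ) • x - (fun i => (((((k : ℤ) + 1) • p) i : ℤ) : ℝ)) = 0 := by
        funext i
        have := congrFun he i
        simp only [Pi.sub_apply, Pi.smul_apply, smul_eq_mul, Pi.zero_apply] at this ⊢
        push_cast
        linear_combination ((k : ℝ) + 1) * this
      simp only
      rw [this, norm_zero]
      positivity
  · push Not at hex
    set S := {qp : ℕ × (Fin n → ℤ) | 0 < qp.1 ∧
      ‖(qp.1 : ℝ) • x - (fun i => (qp.2 i : ℝ))‖ ≤ (qp.1 : ℝ) ^ (-α)} with hS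
    have hne : S.Nonempty := by
      obtain ⟨q, p, h0, h1, -⟩ := h 1 one_pos
      exact ⟨(q, p), h0, h1⟩
    obtain ⟨m, hm, hmin⟩ := Set.exists_min_image S
      (fun qp => ‖(qp.1 : ℝ) • x - (fun i => (qp.2 i : ℝ))‖) hfin hne
    obtain ⟨q, p, h0, h1, h2⟩ := h _ (norm_pos_iff.2 (hex m.1 m.2 hm.1))
    exact absurd (hmin (q, p) ⟨h0, h1⟩) (not_le.2 h2)

lemma l_of_small {n : ℕ} {β : ℝ} {x : Fin n → ℝ}
    (h : ∀ ε > 0, ∃ u : Fin n → ℤ, ∃ v : ℤ, u ≠ 0 ∧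
      |(∑ i, (u i : ℝ) * x i) - (v : ℝ)| ≤ ‖(fun i => (u i : ℝ) : Fin n → ℝ)‖ ^ (-β) ∧
      |(∑ i, (u i : ℝ) * x i) - (v : ℝ)| < ε) : x ∈ LBeta n β := by
  have h' : ∀ ε > 0, ∃ u : Fin n → ℤ, ∃ v : ℕ, u ≠ 0 ∧
      |(∑ i, (u i : ℝ) * x i) - (v : ℝ)| ≤ ‖(fun i => (u i : ℝ) : Fin n → ℝ)‖ ^ (-β) ∧
      |(∑ i, (u i : ℝ) * x i) - (v : ℝ)| < ε := by
    intro ε hε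
    obtain ⟨u, v, h0, h1, h2⟩ := h ε hε
    rcases le_total 0 v with hv | hv
    · lift v to ℕ using hv
      exact ⟨u, v, h0, by simpa using h1, by simpa using h2⟩
    · obtain ⟨w, rfl⟩ : ∃ w : ℕ, v = -(w : ℤ) := ⟨v.natAbs, by omega⟩
      have e : |(∑ i, ((-u) i : ℝ) * x i) - (w : ℝ)| =
          |(∑ i, (u i : ℝ) * x i) - ((-(w : ℤ) : ℤ) : ℝ)| := by
        rw [← abs_neg]
        congr 1
        simp [Finset.sum_neg_distrib]
        ring
      have e2 : ‖(fun i => ((-u) i : ℝ) : Fin n → ℝ)‖ = ‖(fun i => (u i : ℝ) : Fin n → ℝ)‖ := by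
        rw [← norm_neg]
        congr 1
        funext i
        simp
      refine ⟨-u, w, neg_ne_zero.2 h0, ?_, ?_⟩
      · have e2' : ‖(fun i => (((-u) i : ℤ) : ℝ) : Fin n → ℝ)‖ =
          ‖(fun i => (u i : ℝ) : Fin n → ℝ)‖ := by simpa using e2
        rw [e2']
        simpa using e.trans_le h1
      · simpa using e.trans_lt h2
  clear h
  intro hfin
  by_cases hex : ∃ u : Fin n → ℤ, ∃ v : ℕ, u ≠ 0 ∧ (∑ i, (u i : ℝ) * x i) - (v : ℝ) = 0
  · obtain ⟨u, v, hu, he⟩ := hex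
    refine Set.infinite_of_injective_forall_mem (f := fun k : ℕ => (((k : ℤ) + 1) • u, (k + 1) * v))
      ?_ ?_ hfin
    · intro a b hab
      have := (Prod.mk.inj hab).1
      have := smul_left_injective ℤ hu this
      simpa using this
    · intro k
      refine ⟨smul_ne_zero (by positivity) hu, ?_⟩
      have : (∑ i, (((((k : ℤ) + 1) • u) i : ℤ) : ℝ) * x i) - (((k + 1) * v : ℕ) : ℝ) = 0 := by
        have e : (∑ i, (((((k : ℤ) + 1) • u) i : ℤ) : ℝ) * x i) =
            ((k : ℝ) + 1) * ∑ i, (u i : ℝ) * x i := by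
          rw [Finset.mul_sum]
          refine Finset.sum_congr rfl fun i _ => ?_
          simp
          ring
        rw [e]
        push_cast
        linear_combination ((k : ℝ) + 1) * he
      simp only
      rw [this, abs_zero]
      positivity
  · push Not at hex
    set S := {qp : (Fin n → ℤ) × ℕ | qp.1 ≠ 0 ∧
      |(∑ i, (qp.1 i : ℝ) * x i) - (qp.2 : ℝ)| ≤
        ‖(fun i => (qp.1 i : ℝ) : Fin n → ℝ)‖ ^ (-β)} with hS
    have hne : S.Nonempty := by
      obtain ⟨q, p, h0, h1, -⟩ := h' 1 one_pos
      exact ⟨(q, p), h0, h1⟩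
    obtain ⟨m, hm, hmin⟩ := Set.exists_min_image S
      (fun qp => |(∑ i, (qp.1 i : ℝ) * x i) - (qp.2 : ℝ)|) hfin hne
    obtain ⟨q, p, h0, h1, h2⟩ := h' _ (abs_pos.2 (hex m.1 m.2 hm.1))
    exact absurd (hmin (q, p) ⟨h0, h1⟩) (not_le.2 h2)

/-- pigeonhole for the direction from simultaneous to linear -/
lemma pigeon_one {n : ℕ} (q U : ℕ) (hq : 0 < q) (hU : q < (U + 1) ^ n) (p : Fin n → ℤ) :
    ∃ u : Fin n → ℤ, ∃ v : ℤ, u ≠ 0 ∧ (∀ i, |u i| ≤ U) ∧ ∑ i, u i * p i = q * v := by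
  have : NeZero q := ⟨hq.ne'⟩
  obtain ⟨a, b, hab, hf⟩ := Fintype.exists_ne_map_eq_of_card_lt
    (fun w : Fin n → Fin (U + 1) => ((∑ i, ((w i : ℕ) : ℤ) * p i : ℤ) : ZMod q))
    (by simpa [ZMod.card] using hU)
  have hd := (ZMod.intCast_eq_intCast_iff_dvd_sub _ _ q).1 hf
  obtain ⟨v, hv⟩ := hd
  refine ⟨fun i => ((b i : ℕ) : ℤ) - ((a i : ℕ) : ℤ), v, ?_, ?_, ?_⟩
  · intro h
    apply hab
    funext i
    have := congrFun h i
    simp only [Pi.zero_apply] at this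
    apply Fin.ext
    omega
  · intro i
    have := (a i).2
    have := (b i).2
    simp only
    rw [abs_le]
    constructor <;> omega
  · rw [← hv, ← Finset.sum_sub_distrib]
    refine Finset.sum_congr rfl fun i _ => ?_
    ring

/-- pigeonhole for the direction from linear to simultaneous -/
lemma pigeon_two {n : ℕ} (K : ℕ) (hK : 0 < K) (x : Fin n → ℝ) (u : Fin n → ℤ) (v : ℤ) (j : Fin n)
    (hj : u j ≠ 0) :
    ∃ q : ℕ, ∃ p : Fin n → ℤ, 0 < q ∧ q ≤ (u j).natAbs * K ^ (n - 1) ∧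
      (∀ i, i ≠ j → |(q : ℝ) * x i - p i| ≤ 1 / K) ∧ ∑ i, u i * p i = v * q := by
  set U := (u j).natAbs with hU
  have : NeZero U := ⟨by simpa [hU] using hj⟩
  have hKr : (0 : ℝ) < K := by exact_mod_cast hK
  have hbox : ∀ y : ℝ, ⌊(K : ℝ) * Int.fract y⌋₊ < K := by
    intro y
    rw [Nat.floor_lt (by positivity)]
    have := Int.fract_lt_one y
    nlinarith
  let F : Fin (U * K ^ (n - 1) + 1) → ZMod U × ({i // i ≠ j} → Fin K) := fun k =>
    (((v * ((k : ℕ) : ℤ) - ∑ i ∈ Finset.univ.erase j, u i * ⌊((k : ℕ) : ℝ) * x i⌋ : ℤ) : ZMod U),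
      fun i => ⟨⌊(K : ℝ) * Int.fract (((k : ℕ) : ℝ) * x i)⌋₊, hbox _⟩)
  have hcard : Fintype.card (ZMod U × ({i // i ≠ j} → Fin K)) <
      Fintype.card (Fin (U * K ^ (n - 1) + 1)) := by
    simp [ZMod.card, Fintype.card_subtype_compl]
  obtain ⟨a', b', hab', hf'⟩ := Fintype.exists_ne_map_eq_of_card_lt F hcard
  obtain ⟨a, b, hab, hf⟩ : ∃ a b, a < b ∧ F a = F b := by
    rcases lt_or_gt_of_ne hab' with h | h
    · exact ⟨a', b', h, hf'⟩
    · exact ⟨b', a', h, hf'.symm⟩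
  have hab2 : (a : ℕ) < b := hab
  have hb := b.2
  obtain ⟨hf1, hf2⟩ := Prod.mk.inj hf
  have hd := (ZMod.intCast_eq_intCast_iff_dvd_sub _ _ U).1 hf1
  obtain ⟨w, hw⟩ : u j ∣ _ := Int.natAbs_dvd.1 hd
  refine ⟨(b : ℕ) - a, fun i => if i = j then w else
    ⌊((b : ℕ) : ℝ) * x i⌋ - ⌊((a : ℕ) : ℝ) * x i⌋, by omega, by omega, ?_, ?_⟩
  · intro i hi
    have h := congrFun hf2 ⟨i, hi⟩
    have h := congrArg Fin.val h
    simp only at h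
    beta_reduce
    rw [if_neg hi, Nat.cast_sub hab2.le]
    push_cast
    have e : ((b : ℕ) - (a : ℕ) : ℝ) * x i - (⌊((b : ℕ) : ℝ) * x i⌋ - ⌊((a : ℕ) : ℝ) * x i⌋) =
        Int.fract (((b : ℕ) : ℝ) * x i) - Int.fract (((a : ℕ) : ℝ) * x i) := by
      unfold Int.fract
      ring
    rw [e]
    set s := Int.fract (((b : ℕ) : ℝ) * x i)
    set t := Int.fract (((a : ℕ) : ℝ) * x i)
    have hs : 0 ≤ s := Int.fract_nonneg _
    have ht : 0 ≤ t := Int.fract_nonneg _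
    have h1 := Nat.floor_le (show 0 ≤ (K : ℝ) * s by positivity)
    have h2 := Nat.lt_floor_add_one ((K : ℝ) * s)
    have h3 := Nat.floor_le (show 0 ≤ (K : ℝ) * t by positivity)
    have h4 := Nat.lt_floor_add_one ((K : ℝ) * t)
    rw [h] at h3 h4
    rw [le_div_iff₀ hKr, ← abs_of_pos hKr, ← abs_mul, abs_le]
    constructor <;> nlinarith
  · rw [← Finset.add_sum_erase _ _ (Finset.mem_univ j)]
    beta_reduce
    rw [if_pos rfl, ← hw]
    have e : ∑ i ∈ Finset.univ.erase j, u i * (if i = j then w else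
        ⌊((b : ℕ) : ℝ) * x i⌋ - ⌊((a : ℕ) : ℝ) * x i⌋) =
        ∑ i ∈ Finset.univ.erase j, u i * ⌊((b : ℕ) : ℝ) * x i⌋ -
        ∑ i ∈ Finset.univ.erase j, u i * ⌊((a : ℕ) : ℝ) * x i⌋ := by
      rw [← Finset.sum_sub_distrib]
      refine Finset.sum_congr rfl fun i hi => ?_
      rw [if_neg (Finset.ne_of_mem_erase hi)]
      ring
    rw [e, Nat.cast_sub hab2.le]
    ring

lemma dir_one {n : ℕ} (hn : 0 < n) {α : ℝ} (hα : 1 / (n : ℝ) < α) {x : Fin n → ℝ}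
    (hx : x ∈ SAlpha n α) : ∃ β, (n : ℝ) < β ∧ x ∈ LBeta n β := by
  have hnr : (0 : ℝ) < n := by exact_mod_cast hn
  obtain ⟨δ, hδ⟩ : ∃ δ, δ = α - 1 / (n : ℝ) := ⟨_, rfl⟩
  have hδ0 : 0 < δ := by rw [hδ]; linarith
  have hα0 : 0 < α := lt_trans (by positivity) hα
  refine ⟨n * (1 + δ / 2), by nlinarith [mul_pos hnr hδ0], l_of_small fun ε hε => ?_⟩
  have t1 : ∀ᶠ q : ℕ in atTop, (n : ℝ) ≤ (q : ℝ) ^ (δ / 2) :=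
    ((tendsto_rpow_atTop (half_pos hδ0)).comp tendsto_natCast_atTop_atTop).eventually_ge_atTop _
  have t2 : ∀ᶠ q : ℕ in atTop, (q : ℝ) ^ (-(1 + δ / 2)) < ε :=
    ((tendsto_rpow_neg_atTop (show 0 < 1 + δ / 2 by positivity)).comp
      tendsto_natCast_atTop_atTop).eventually_lt_const hε
  obtain ⟨N, hN⟩ := eventually_atTop.1 (t1.and t2)
  obtain ⟨q, p, hNq, hq, hqp⟩ := s_unbounded hα0 hx N
  obtain ⟨h1, h2⟩ := hN q hNq
  have hqr : (0 : ℝ) < q := by exact_mod_cast hq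
  set R : ℝ := (q : ℝ) ^ (1 / (n : ℝ)) with hR
  have hR0 : 0 < R := Real.rpow_pos_of_pos hqr _
  have hRn : R ^ n = q := by
    rw [hR, one_div, Real.rpow_inv_natCast_pow hqr.le hn.ne']
  have hfl : ((⌊R⌋₊ : ℕ) : ℝ) ≤ R := Nat.floor_le hR0.le
  have hU : q < (⌊R⌋₊ + 1) ^ n := by
    have : (q : ℝ) < ((⌊R⌋₊ : ℝ) + 1) ^ n := by
      rw [← hRn]
      exact pow_lt_pow_left₀ (Nat.lt_floor_add_one R) hR0.le hn.ne'
    exact_mod_cast this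
  obtain ⟨u, v, hu, hub, huv⟩ := pigeon_one q _ hq hU p
  have hub' : ∀ i, |(u i : ℝ)| ≤ R := fun i =>
    le_trans (by exact_mod_cast hub i) hfl
  have hnorm : ‖(fun i => (u i : ℝ) : Fin n → ℝ)‖ ≤ R := by
    rw [pi_norm_le_iff_of_nonneg hR0.le]
    exact hub'
  have huv' : ∑ i, (u i : ℝ) * p i = q * v := by exact_mod_cast huv
  have e1 : (q : ℝ) * ((∑ i, (u i : ℝ) * x i) - v) = ∑ i, (u i : ℝ) * ((q : ℝ) * x i - p i) := by
    rw [mul_sub, ← huv', Finset.mul_sum, ← Finset.sum_sub_distrib]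
    refine Finset.sum_congr rfl fun i _ => ?_
    ring
  have e2 : |∑ i, (u i : ℝ) * ((q : ℝ) * x i - p i)| ≤ n * (R * (q : ℝ) ^ (-α)) := by
    calc _ ≤ ∑ i : Fin n, |(u i : ℝ) * ((q : ℝ) * x i - p i)| := Finset.abs_sum_le_sum_abs _ _
      _ ≤ ∑ i : Fin n, R * (q : ℝ) ^ (-α) := by
        refine Finset.sum_le_sum fun i _ => ?_
        rw [abs_mul]
        have a := norm_le_pi_norm ((q : ℝ) • x - (fun i => (p i : ℝ))) i
        simp only [Pi.sub_apply, Pi.smul_apply, smul_eq_mul, Real.norm_eq_abs] at a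
        exact mul_le_mul (hub' i) (a.trans hqp) (abs_nonneg _) hR0.le
      _ = _ := by simp
  have e3 : n * (R * (q : ℝ) ^ (-α)) ≤ (q : ℝ) ^ (-(δ / 2)) := by
    have : R * (q : ℝ) ^ (-α) = (q : ℝ) ^ (-δ) := by
      rw [hR, ← Real.rpow_add hqr]
      congr 1
      rw [hδ]
      ring
    rw [this]
    calc n * (q : ℝ) ^ (-δ) ≤ (q : ℝ) ^ (δ / 2) * (q : ℝ) ^ (-δ) := by gcongr
      _ = _ := by
        rw [← Real.rpow_add hqr]
        congr 1
        ring
  have e4 : |(∑ i, (u i : ℝ) * x i) - v| ≤ (q : ℝ) ^ (-(1 + δ / 2)) := by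
    have h : (q : ℝ) * |(∑ i, (u i : ℝ) * x i) - v| ≤ (q : ℝ) ^ (-(δ / 2)) := by
      rw [← abs_of_pos hqr, ← abs_mul, abs_of_pos hqr, e1]
      exact e2.trans e3
    have h' : (q : ℝ) ^ (-(δ / 2)) = q * (q : ℝ) ^ (-(1 + δ / 2)) := by
      rw [← Real.rpow_one_add' hqr.le (by linarith)]
      congr 1
      ring
    rw [h'] at h
    exact le_of_mul_le_mul_left h hqr
  refine ⟨u, v, hu, e4.trans ?_, e4.trans_lt h2⟩
  have hpos : 0 < ‖(fun i => (u i : ℝ) : Fin n → ℝ)‖ := lt_of_lt_of_le one_pos (one_le_norm hn u hu)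
  calc (q : ℝ) ^ (-(1 + δ / 2)) = R ^ (-(n * (1 + δ / 2))) := by
        rw [hR, ← Real.rpow_mul hqr.le]
        congr 1
        field_simp
    _ ≤ _ := Real.rpow_le_rpow_of_nonpos hpos hnorm (by
        have : 0 < n * (1 + δ / 2) := by positivity
        linarith)

lemma dir_two {n : ℕ} (hn : 0 < n) {β : ℝ} (hβ : (n : ℝ) < β) {x : Fin n → ℝ}
    (hx : x ∈ LBeta n β) : ∃ α, 1 / (n : ℝ) < α ∧ x ∈ SAlpha n α := by
  have hnr : (0 : ℝ) < n := by exact_mod_cast hn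
  have hn1 : (1 : ℝ) ≤ n := by exact_mod_cast hn
  have hβ0 : 0 < β := hnr.trans hβ
  obtain ⟨γ, hγ⟩ : ∃ γ, γ = β / n := ⟨_, rfl⟩
  have hγ1 : 1 < γ := by rw [hγ, lt_div_iff₀ hnr]; linarith
  have hγ0 : 0 < γ := by linarith
  obtain ⟨s, hs⟩ : ∃ s, s = 1 / γ + (n - 1 : ℝ) := ⟨_, rfl⟩
  have hs0 : 0 < s := by
    have : 0 < 1 / γ := by positivity
    rw [hs]; linarith
  have hsn : s < n := by
    have : 1 / γ < 1 := by rw [div_lt_one hγ0]; exact hγ1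
    rw [hs]; linarith
  obtain ⟨α, hα⟩ : ∃ α, α = 2 / (n + s) := ⟨_, rfl⟩
  have hα0 : 0 < α := by rw [hα]; positivity
  have hc : 0 < 1 - α * s := by
    have : α * s < 1 := by
      rw [hα, div_mul_eq_mul_div, div_lt_one (by positivity)]
      linarith
    linarith
  refine ⟨α, ?_, s_of_small hn fun ε hε => ?_⟩
  · rw [hα, div_lt_div_iff₀ hnr (by positivity)]
    linarith
  have t1 : ∀ᶠ k : ℕ in atTop, (n : ℝ) * 2 ^ α ≤ (k : ℝ) ^ (1 - α * s) :=
    ((tendsto_rpow_atTop hc).comp tendsto_natCast_atTop_atTop).eventually_ge_atTop _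
  have t2 : ∀ᶠ k : ℕ in atTop, (n : ℝ) / k < ε :=
    (tendsto_const_div_atTop_nhds_zero_nat (n : ℝ)).eventually_lt_const hε
  obtain ⟨N, hN⟩ := eventually_atTop.1 (t1.and t2)
  obtain ⟨u, v, hNu, hu, huv⟩ := l_unbounded hn hβ0 hx N
  obtain ⟨j, hj, hnorm⟩ := norm_max hn u
  have h1U := one_le_norm hn u hu
  rw [hnorm] at hNu huv h1U
  set U : ℝ := |(u j : ℝ)| with hUdef
  have hU0 : 0 < U := by linarith
  have hUnat : U = ((u j).natAbs : ℝ) := by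
    rw [hUdef, Nat.cast_natAbs, Int.cast_abs]
  have huj : u j ≠ 0 := by
    intro h
    rw [hUdef, h] at hU0
    simp at hU0
  set K : ℕ := ⌊U ^ γ⌋₊ with hK
  have hUγ : U ≤ U ^ γ := Real.self_le_rpow_of_one_le h1U hγ1.le
  have hKU : (u j).natAbs ≤ K := by
    apply Nat.le_floor
    rw [← hUnat]
    exact hUγ
  have hNK : N ≤ K := by
    refine le_trans ?_ hKU
    rw [hUnat] at hNu
    exact_mod_cast hNu
  obtain ⟨h1, h2⟩ := hN K hNK
  have hK1 : 1 ≤ K := by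
    refine le_trans ?_ hKU
    omega
  have hK1r : (1 : ℝ) ≤ K := by exact_mod_cast hK1
  have hK0 : (0 : ℝ) < K := by linarith
  have hKle : (K : ℝ) ≤ U ^ γ := Nat.floor_le (by positivity)
  have hKge : U ^ γ ≤ 2 * K := by
    have := Nat.lt_floor_add_one (U ^ γ)
    rw [← hK] at this
    linarith
  obtain ⟨q, p, hq, hqQ, hqp, hsum⟩ := pigeon_two K hK1 x u v j huj
  have hqr : (0 : ℝ) < q := by exact_mod_cast hq
  have hqQ' : (q : ℝ) ≤ U * (K : ℝ) ^ (n - 1) := by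
    rw [hUnat]
    exact_mod_cast hqQ
  have hKn : (K : ℝ) ^ n ≤ U ^ β := by
    calc (K : ℝ) ^ n ≤ (U ^ γ) ^ n := by gcongr
      _ = U ^ β := by
        rw [← Real.rpow_natCast, ← Real.rpow_mul hU0.le, hγ]
        congr 1
        field_simp
  have hsmall : (K : ℝ) ^ (n - 1) * U ^ (-β) ≤ 1 / K := by
    rw [Real.rpow_neg hU0.le, ← div_eq_mul_inv,
      div_le_div_iff₀ (by positivity) hK0, ← pow_succ, Nat.sub_add_cancel hn, one_mul]
    exact hKn
  have hsum' : ∑ i, (u i : ℝ) * p i = v * q := by exact_mod_cast hsum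
  have e1 : (u j : ℝ) * ((q : ℝ) * x j - p j) = (q : ℝ) * ((∑ i, (u i : ℝ) * x i) - v) -
      ∑ i ∈ Finset.univ.erase j, (u i : ℝ) * ((q : ℝ) * x i - p i) := by
    have a : (q : ℝ) * ((∑ i, (u i : ℝ) * x i) - v) =
        ∑ i, (u i : ℝ) * ((q : ℝ) * x i - p i) := by
      rw [mul_sub, mul_comm (q : ℝ) (v : ℝ), ← hsum', Finset.mul_sum, ← Finset.sum_sub_distrib]
      refine Finset.sum_congr rfl fun i _ => ?_
      ring
    rw [a, ← Finset.add_sum_erase _ _ (Finset.mem_univ j)]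
    ring
  have e2 : |∑ i ∈ Finset.univ.erase j, (u i : ℝ) * ((q : ℝ) * x i - p i)| ≤
      (n - 1 : ℝ) * (U * (1 / K)) := by
    calc _ ≤ ∑ i ∈ Finset.univ.erase j, |(u i : ℝ) * ((q : ℝ) * x i - p i)| :=
          Finset.abs_sum_le_sum_abs _ _
      _ ≤ ∑ i ∈ Finset.univ.erase j, U * (1 / (K : ℝ)) := by
        refine Finset.sum_le_sum fun i hi => ?_
        rw [abs_mul]
        refine mul_le_mul ?_ (hqp i (Finset.ne_of_mem_erase hi)) (abs_nonneg _) hU0.le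
        rw [hUdef]
        exact_mod_cast hj i
      _ = _ := by
        rw [Finset.sum_const, Finset.card_erase_of_mem (Finset.mem_univ j), Finset.card_univ,
          Fintype.card_fin, nsmul_eq_mul, Nat.cast_sub hn, Nat.cast_one]
  have e3 : |(q : ℝ) * ((∑ i, (u i : ℝ) * x i) - v)| ≤ U * (1 / K) := by
    rw [abs_mul, abs_of_pos hqr]
    calc _ ≤ (U * (K : ℝ) ^ (n - 1)) * U ^ (-β) :=
          mul_le_mul hqQ' huv (abs_nonneg _) (by positivity)
      _ = U * ((K : ℝ) ^ (n - 1) * U ^ (-β)) := by ring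
      _ ≤ _ := by gcongr
  have e4 : |(q : ℝ) * x j - p j| ≤ n / K := by
    have h : U * |(q : ℝ) * x j - p j| ≤ U * (n / K) := by
      rw [hUdef, ← abs_mul, ← hUdef, e1]
      refine (abs_sub _ _).trans ((add_le_add e3 e2).trans (le_of_eq ?_))
      ring
    exact le_of_mul_le_mul_left h hU0
  have herr : ‖(q : ℝ) • x - (fun i => (p i : ℝ))‖ ≤ n / K := by
    rw [pi_norm_le_iff_of_nonneg (by positivity)]
    intro i
    simp only [Pi.sub_apply, Pi.smul_apply, smul_eq_mul, Real.norm_eq_abs]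
    by_cases hi : i = j
    · rw [hi]; exact e4
    · refine (hqp i hi).trans ?_
      gcongr
  refine ⟨q, p, hq, herr.trans ?_, herr.trans_lt h2⟩
  have hUK : U ≤ 2 * (K : ℝ) ^ (1 / γ) := by
    calc U = (U ^ γ) ^ (1 / γ) := by
          rw [← Real.rpow_mul hU0.le, mul_one_div_cancel hγ0.ne', Real.rpow_one]
      _ ≤ (2 * K) ^ (1 / γ) := by gcongr
      _ = 2 ^ (1 / γ) * (K : ℝ) ^ (1 / γ) := Real.mul_rpow (by norm_num) hK0.le
      _ ≤ 2 * (K : ℝ) ^ (1 / γ) := by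
        gcongr
        apply Real.rpow_le_self_of_one_le (by norm_num)
        rw [div_le_one hγ0]
        exact hγ1.le
  have hqs : (q : ℝ) ≤ 2 * (K : ℝ) ^ s := by
    calc (q : ℝ) ≤ U * (K : ℝ) ^ (n - 1) := hqQ'
      _ ≤ (2 * (K : ℝ) ^ (1 / γ)) * (K : ℝ) ^ (n - 1) := by gcongr
      _ = _ := by
        rw [hs, Real.rpow_add hK0, mul_assoc, ← Real.rpow_natCast, Nat.cast_sub hn, Nat.cast_one]
  calc (n : ℝ) / K ≤ (2 * (K : ℝ) ^ s) ^ (-α) := by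
        rw [Real.mul_rpow (by norm_num) (by positivity), ← Real.rpow_mul hK0.le,
          div_le_iff₀ hK0, Real.rpow_neg (by norm_num)]
        have h3 : (K : ℝ) ^ (s * -α) * K = (K : ℝ) ^ (1 - α * s) := by
          rw [← Real.rpow_add_one hK0.ne']
          congr 1
          ring
        rw [mul_assoc, h3, inv_mul_eq_div, le_div_iff₀ (by positivity)]
        exact h1
    _ ≤ _ := Real.rpow_le_rpow_of_nonpos hqr hqs (by linarith)

/-- Khintchine's transference principle: the set of very well approximable
vectors in `ℝⁿ` defined simultaneously equals the one defined linearly: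
`⋃_{α > 1/n} S_α(ℝⁿ) = ⋃_{β > n} L_β(ℝⁿ)`. -/
theorem stmt_16 (n : ℕ) (hn : 0 < n) :
    (⋃ α ∈ Set.Ioi (1 / (n : ℝ)), SAlpha n α) = ⋃ β ∈ Set.Ioi ((n : ℝ)), LBeta n β := by
  ext x
  simp only [Set.mem_iUnion, Set.mem_Ioi, exists_prop]
  constructor
  · rintro ⟨α, hα, hx⟩
    exact dir_one hn hα hx
  · rintro ⟨β, hβ, hx⟩
    exact dir_two hn hβ hx
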